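/- arXiv:1007.3467 — 2 statements merged into one kernel-verified Lean document; each statement's English description precedes it below -/
import Mathlib

section
/- Let σ be a Strang canonical permutation of {1,…,n} such that every fixed point of σ lies in a trivial section. Then iterating the reduction map starting from σ reaches the identity permutation after finitely many steps; consequently σ is the product of the corresponding reducing permutations, each of which has bandwidth at most 1. -/
/-- The bandwidth of a permutation `σ` of `{0,…,n-1}`: `max_i |σ(i) - i|`. -/
def bandwidth {n : ℕ} (σ : Equiv.Perm (Fin n)) : ℕ :=
  Finset.univ.sup fun i : Fin n => ((σ i : ℤ) - (i : ℤ)).natAbs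

/-- `c` is a cut point of `σ` if `σ` maps the initial segment `{0,…,c}` onto itself. -/
def IsCutPoint {n : ℕ} (σ : Equiv.Perm (Fin n)) (c : Fin n) : Prop :=
  ∀ j : Fin n, j ≤ c → σ j ≤ c

/-- Indices `i ≤ j` lie in the same section of `σ` if there is no cut point `c`
with `i ≤ c < j`. -/
def SameSection {n : ℕ} (σ : Equiv.Perm (Fin n)) (i j : Fin n) : Prop :=
  i ≤ j ∧ ∀ c : Fin n, i ≤ c → c < j → ¬ IsCutPoint σ c

/-- Unordered version of `SameSection`. -/
def InSameSection {n : ℕ} (σ : Equiv.Perm (Fin n)) (i j : Fin n) : Prop :=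
  SameSection σ i j ∨ SameSection σ j i

/-- `σ` is upper-canonical: for `i < j` with `σ(i) > i` and `σ(j) > j`, `σ(i) < σ(j)`. -/
def UpperCanonical {n : ℕ} (σ : Equiv.Perm (Fin n)) : Prop :=
  ∀ i j : Fin n, i < j → i < σ i → j < σ j → σ i < σ j

/-- `σ` is lower-canonical: for `i < j` with `σ(i) < i` and `σ(j) < j`, `σ(i) < σ(j)`. -/
def LowerCanonical {n : ℕ} (σ : Equiv.Perm (Fin n)) : Prop :=
  ∀ i j : Fin n, i < j → σ i < i → σ j < j → σ i < σ j

/-- `σ` is Strang canonical if it is both upper- and lower-canonical. -/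
def StrangCanonical {n : ℕ} (σ : Equiv.Perm (Fin n)) : Prop :=
  UpperCanonical σ ∧ LowerCanonical σ

/-- `σ` is row-settled: no indices `i < j` in the same section
with `σ(i) < i` (negative row) and `σ(j) > j` (positive row). -/
def RowSettled {n : ℕ} (σ : Equiv.Perm (Fin n)) : Prop :=
  ∀ i j : Fin n, i < j → SameSection σ i j → ¬ (σ i < i ∧ j < σ j)

/-- `σ` is settled if it is row-settled or column-settled
(column-settled means `σ⁻¹` is row-settled). -/
def Settled {n : ℕ} (σ : Equiv.Perm (Fin n)) : Prop :=
  RowSettled σ ∨ RowSettled σ⁻¹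

/-- The reducing permutation of `σ`: the product of the (pairwise disjoint)
transpositions `(i, i+1)` over all `i` with `σ(i) > i` and `σ(i+1) < i+1`. -/
def reducingPerm {n : ℕ} (σ : Equiv.Perm (Fin n)) : Equiv.Perm (Fin n) :=
  ((List.finRange n).filterMap fun i : Fin n =>
    if h : (i : ℕ) + 1 < n then
      let j : Fin n := ⟨(i : ℕ) + 1, h⟩
      if i < σ i ∧ σ j < j then some (Equiv.swap i j) else none
    else none).prod

/-- The reduction of `σ` is `σ` composed with its reducing permutation. -/
def reduction {n : ℕ} (σ : Equiv.Perm (Fin n)) : Equiv.Perm (Fin n) :=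
  σ * reducingPerm σ

/-- A bubblesort step for `σ`: a nonidentity permutation `t` that is a product of
pairwise disjoint adjacent transpositions `(i, i+1)`, each satisfying `σ(i) > σ(i+1)`. -/
def IsBubbleStep {n : ℕ} (σ t : Equiv.Perm (Fin n)) : Prop :=
  t ≠ 1 ∧ ∃ l : List (Fin n),
    l.Pairwise (fun i j => (i : ℕ) + 2 ≤ (j : ℕ)) ∧
    (∀ i ∈ l, ∃ h : (i : ℕ) + 1 < n, σ ⟨(i : ℕ) + 1, h⟩ < σ i) ∧
    t = (l.map fun i : Fin n =>
      (if h : (i : ℕ) + 1 < n then Equiv.swap i ⟨(i : ℕ) + 1, h⟩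
       else 1 : Equiv.Perm (Fin n))).prod

/-- The number of inversions of `σ`: pairs `i < j` with `σ(i) > σ(j)`. -/
def inversions {n : ℕ} (σ : Equiv.Perm (Fin n)) : ℕ :=
  (Finset.univ.filter fun p : Fin n × Fin n => p.1 < p.2 ∧ σ p.2 < σ p.1).card

/-- The cyclic shift by `s` on `{0,…,n-1}`: `i ↦ (i + s) mod n`. -/
def cyclicShift (n s : ℕ) : Equiv.Perm (Fin n) := (finRotate n) ^ s

/-!
The hypotheses force `σ` to avoid the pattern `321`: the middle position of a decreasing triple
would lie above, below or on the diagonal, contradicting upper-canonicity, lower-canonicity or the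
assumption on fixed points, respectively. In a `321`-avoiding permutation every inversion `i < j`
has `i < σ i` and `σ j < j`, so the reduction map swaps exactly the adjacent descents. The reducing
permutation embeds the inversions of the reduction into those of `σ` and misses the swapped pairs.
Hence reduction preserves `321`-avoidance and strictly lowers the number of inversions of a
non-identity permutation.
-/

open Equiv Set

/-- A function avoids the pattern `321` if it has no strictly decreasing triple of values. This is
the invariant preserved by the reduction map. -/
def Avoids321 {α β : Type*} [LT α] [LT β] (f : α → β) : Prop :=
  ∀ ⦃a b c : α⦄, a < b → b < c → f b < f a → ¬ f c < f b

/-- An adjacent pair of positions swapped by the reducing permutation of `σ`: the left one is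
moved up by `σ` and the right one is moved down. -/
structure IsReducingPair {α : Type*} [Preorder α] (σ : Perm α) (i j : α) : Prop where
  covBy : i ⋖ j
  lt_apply_left : i < σ i
  apply_right_lt : σ j < j

lemma mem_of_apply_mem_of_mapsTo {α : Type*} {σ : Perm α} {s : Set α} [Finite s] {a : α}
    (hs : MapsTo σ s s) (ha : σ a ∈ s) : a ∈ s := by
  simpa using Perm.perm_symm_mapsTo_iff_mapsTo.2 hs ha

section LinearOrder

variable {α : Type*} [LinearOrder α] {σ : Perm α} {i j k l : α}

namespace Avoids321

variable [Finite α]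

lemma lt_apply_of_inversion (hσ : Avoids321 σ) (hij : i < j) (hinv : σ j < σ i) : i < σ i := by
  by_contra! hi
  have hmaps : MapsTo σ (Iio i) (Iio i) := fun a (ha : a < i) => by
    have hle : σ a ≤ σ i := not_lt.1 fun h => hσ ha hij h hinv
    exact (hle.lt_of_ne (σ.injective.ne ha.ne)).trans_le hi
  have hj : j ∈ Iio i := mem_of_apply_mem_of_mapsTo hmaps (hinv.trans_le hi)
  exact hij.not_gt hj

lemma apply_lt_of_inversion (hσ : Avoids321 σ) (hij : i < j) (hinv : σ j < σ i) : σ j < j := by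
  by_contra! hj
  have hmaps : MapsTo σ (Ioi j) (Ioi j) := fun a (ha : j < a) => by
    have hle : σ j ≤ σ a := not_lt.1 fun h => hσ hij ha hinv h
    exact hj.trans_lt (hle.lt_of_ne (σ.injective.ne ha.ne))
  have hi : i ∈ Ioi j := mem_of_apply_mem_of_mapsTo hmaps (hj.trans_lt hinv)
  exact hij.not_gt hi

lemma exists_isReducingPair [LocallyFiniteOrder α] (hσ : Avoids321 σ) (hne : σ ≠ 1) :
    ∃ i j, IsReducingPair σ i j := by
  have hmono : ¬ Monotone σ := fun h =>
    hne (DFunLike.coe_injective (h.strictMono_of_injective σ.injective).eq_id)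
  simp only [monotone_iff_forall_covBy, not_forall, not_le] at hmono
  obtain ⟨i, j, hij, hinv⟩ := hmono
  exact ⟨i, j, hij, hσ.lt_apply_of_inversion hij.lt hinv, hσ.apply_lt_of_inversion hij.lt hinv⟩

end Avoids321

namespace IsReducingPair

lemma apply_lt_apply (h : IsReducingPair σ i j) : σ j < σ i :=
  (h.covBy.le_of_lt h.apply_right_lt).trans_lt h.lt_apply_left

lemma disjoint_swap (hij : IsReducingPair σ i j) (hkl : IsReducingPair σ k l) (hik : i ≠ k) :
    Perm.Disjoint (swap i j) (swap k l) := by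
  have hjl : j ≠ l := by
    rintro rfl
    exact hik (hij.covBy.unique_left hkl.covBy)
  have hil : i ≠ l := by
    rintro rfl
    exact hij.lt_apply_left.not_gt hkl.apply_right_lt
  have hjk : j ≠ k := by
    rintro rfl
    exact hij.apply_right_lt.not_gt hkl.lt_apply_left
  exact Perm.disjoint_swap_swap (by simp [hij.covBy.ne, hkl.covBy.ne, hik, hil, hjk, hjl])

end IsReducingPair

end LinearOrder

section Fin

variable {n : ℕ} {σ : Perm (Fin n)} {i j : Fin n}

lemma IsReducingPair.val_add_one (h : IsReducingPair σ i j) : (i : ℕ) + 1 = j :=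
  Nat.covBy_iff_add_one_eq.1 h.covBy.coe_fin

/-- The factor contributed by position `i` to the product defining `reducingPerm σ`, or `none` if
no reducing pair starts at `i`. -/
def reducingSwap? (σ : Perm (Fin n)) (i : Fin n) : Option (Perm (Fin n)) :=
  if h : (i : ℕ) + 1 < n then
    let j : Fin n := ⟨(i : ℕ) + 1, h⟩
    if i < σ i ∧ σ j < j then some (swap i j) else none
  else none

lemma reducingPerm_eq_prod_filterMap (σ : Perm (Fin n)) :
    reducingPerm σ = ((List.finRange n).filterMap (reducingSwap? σ)).prod :=
  rfl

lemma reducingSwap?_eq_some_iff {τ : Perm (Fin n)} :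
    reducingSwap? σ i = some τ ↔ ∃ j, IsReducingPair σ i j ∧ swap i j = τ := by
  simp only [reducingSwap?, Option.dite_none_right_eq_some, Option.ite_none_right_eq_some,
    Option.some.injEq]
  constructor
  · rintro ⟨hi, ⟨hup, hdown⟩, rfl⟩
    exact ⟨_, ⟨by simp, hup, hdown⟩, rfl⟩
  · rintro ⟨j, h, rfl⟩
    have hi : (i : ℕ) + 1 < n := h.val_add_one ▸ j.isLt
    obtain rfl : ⟨i + 1, hi⟩ = j := Fin.ext h.val_add_one
    exact ⟨hi, ⟨h.lt_apply_left, h.apply_right_lt⟩, rfl⟩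

lemma mem_filterMap_reducingSwap? {τ : Perm (Fin n)} :
    τ ∈ (List.finRange n).filterMap (reducingSwap? σ) ↔
      ∃ i j, IsReducingPair σ i j ∧ swap i j = τ := by
  simp [reducingSwap?_eq_some_iff]

lemma pairwise_disjoint_filterMap_reducingSwap? (σ : Perm (Fin n)) :
    ((List.finRange n).filterMap (reducingSwap? σ)).Pairwise Perm.Disjoint := by
  refine List.Pairwise.filterMap _ ?_ (List.nodup_finRange n)
  intro i k hik τ hτ τ' hτ'
  obtain ⟨j, hij, rfl⟩ := reducingSwap?_eq_some_iff.1 hτ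
  obtain ⟨l, hkl, rfl⟩ := reducingSwap?_eq_some_iff.1 hτ'
  exact hij.disjoint_swap hkl hik

lemma IsReducingPair.reducingPerm_apply_of_mem_support (h : IsReducingPair σ i j) {x : Fin n}
    (hx : x ∈ (swap i j).support) : reducingPerm σ x = swap i j x :=
  (Perm.eq_on_support_mem_disjoint (mem_filterMap_reducingSwap?.2 ⟨i, j, h, rfl⟩)
    (pairwise_disjoint_filterMap_reducingSwap? σ) x hx).symm

lemma IsReducingPair.reducingPerm_apply_left (h : IsReducingPair σ i j) :
    reducingPerm σ i = j := by
  rw [h.reducingPerm_apply_of_mem_support (by simp [h.covBy.ne]), swap_apply_left]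

lemma IsReducingPair.reducingPerm_apply_right (h : IsReducingPair σ i j) :
    reducingPerm σ j = i := by
  rw [h.reducingPerm_apply_of_mem_support (by simp [h.covBy.ne]), swap_apply_right]

lemma reducingPerm_apply_eq_or_isReducingPair (σ : Perm (Fin n)) (i : Fin n) :
    reducingPerm σ i = i ∨ IsReducingPair σ i (reducingPerm σ i) ∨
      IsReducingPair σ (reducingPerm σ i) i := by
  refine or_iff_not_imp_left.2 fun hi => ?_
  obtain ⟨τ, hτ, hiτ⟩ := Perm.exists_mem_support_of_mem_support_prod (Perm.mem_support.2 hi)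
  obtain ⟨k, l, hkl, rfl⟩ := mem_filterMap_reducingSwap?.1 hτ
  rw [Perm.support_swap hkl.covBy.ne, Finset.mem_insert, Finset.mem_singleton] at hiτ
  rcases hiτ with rfl | rfl
  · exact .inl (hkl.reducingPerm_apply_left.symm ▸ hkl)
  · exact .inr (hkl.reducingPerm_apply_right.symm ▸ hkl)

lemma reducingPerm_involutive (σ : Perm (Fin n)) : Function.Involutive (reducingPerm σ) := by
  intro i
  rcases reducingPerm_apply_eq_or_isReducingPair σ i with h | h | h
  · rw [h, h]
  · exact h.reducingPerm_apply_right
  · exact h.reducingPerm_apply_left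

lemma bandwidth_le_iff {b : ℕ} :
    bandwidth σ ≤ b ↔ ∀ i, (σ i : ℕ) ≤ i + b ∧ (i : ℕ) ≤ σ i + b := by
  simp only [bandwidth, Finset.sup_le_iff, Finset.mem_univ, forall_const]
  exact forall_congr' fun i => by omega

lemma bandwidth_reducingPerm_le_one (σ : Perm (Fin n)) : bandwidth (reducingPerm σ) ≤ 1 := by
  refine bandwidth_le_iff.2 fun i => ?_
  rcases reducingPerm_apply_eq_or_isReducingPair σ i with h | h | h
  · simp [h]
  · have := h.val_add_one
    omega
  · have := h.val_add_one
    omega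

lemma reduction_mul_reducingPerm (σ : Perm (Fin n)) : reduction σ * reducingPerm σ = σ := by
  ext i
  simp [reduction, reducingPerm_involutive σ i]

lemma iterate_reduction_mul_prod_reducingPerm (σ : Perm (Fin n)) (q : ℕ) :
    reduction^[q] σ *
      (((List.range q).map fun k => reducingPerm (reduction^[k] σ)).reverse).prod = σ := by
  induction q with
  | zero => simp
  | succ q ih =>
    simpa [List.range_succ, Function.iterate_succ_apply', ← mul_assoc,
      reduction_mul_reducingPerm] using ih

lemma reducingPerm_lt_reducingPerm_of_inversion_reduction (hij : i < j)
    (hinv : reduction σ j < reduction σ i) : reducingPerm σ i < reducingPerm σ j := by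
  by_contra! hle
  have hbound := bandwidth_le_iff.1 (bandwidth_reducingPerm_le_one σ)
  have hlt : reducingPerm σ j < reducingPerm σ i :=
    hle.lt_of_ne ((reducingPerm σ).injective.ne hij.ne')
  have hi : reducingPerm σ i = j := by
    have := hbound i
    have := hbound j
    omega
  have hj : reducingPerm σ j = i := hi ▸ reducingPerm_involutive σ i
  have hpair : IsReducingPair σ i j := by
    have := reducingPerm_apply_eq_or_isReducingPair σ i
    rw [hi] at this
    rcases this with h | h | h
    · exact absurd h hij.ne'
    · exact h
    · exact absurd h.covBy.lt hij.not_gt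
  simp only [reduction, Perm.mul_apply, hi, hj] at hinv
  exact hpair.apply_lt_apply.not_gt hinv

lemma avoids321_reduction (hσ : Avoids321 σ) : Avoids321 (reduction σ) :=
  fun _ _ _ hab hbc hba hcb =>
    hσ (reducingPerm_lt_reducingPerm_of_inversion_reduction hab hba)
      (reducingPerm_lt_reducingPerm_of_inversion_reduction hbc hcb) hba hcb

lemma IsReducingPair.inversions_reduction_lt (h : IsReducingPair σ i j) :
    inversions (reduction σ) < inversions σ := by
  set r := reducingPerm σ
  rw [inversions, ← Finset.card_map (r.prodCongr r).toEmbedding]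
  refine Finset.card_lt_card ((Finset.ssubset_iff_of_subset ?_).2 ⟨(i, j), ?_, ?_⟩)
  · intro p hp
    obtain ⟨⟨a, b⟩, hab, rfl⟩ := Finset.mem_map.1 hp
    obtain ⟨hlt, hinv⟩ := (Finset.mem_filter.1 hab).2
    exact Finset.mem_filter.2
      ⟨Finset.mem_univ _, reducingPerm_lt_reducingPerm_of_inversion_reduction hlt hinv, hinv⟩
  · simp [h.covBy.lt, h.apply_lt_apply]
  · intro hp
    obtain ⟨⟨a, b⟩, hab, heq⟩ := Finset.mem_map.1 hp
    obtain ⟨ha, hb⟩ := Prod.mk.inj heq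
    obtain rfl : a = j := r.injective (ha.trans h.reducingPerm_apply_right.symm)
    obtain rfl : b = i := r.injective (hb.trans h.reducingPerm_apply_left.symm)
    exact (Finset.mem_filter.1 hab).2.1.not_gt h.covBy.lt

theorem Avoids321.exists_iterate_reduction_eq_one (hσ : Avoids321 σ) :
    ∃ q, reduction^[q] σ = 1 := by
  induction hk : inversions σ using Nat.strong_induction_on generalizing σ with
  | _ k ih =>
    by_cases hne : σ = 1
    · exact ⟨0, hne⟩
    · obtain ⟨i, j, hij⟩ := hσ.exists_isReducingPair hne
      obtain ⟨q, hq⟩ := ih _ (hk ▸ hij.inversions_reduction_lt) (avoids321_reduction hσ) rfl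
      exact ⟨q + 1, hq⟩

lemma apply_lt_of_not_sameSection (hij : i ≤ j) (h : ¬ SameSection σ i j) : σ i < j := by
  simp only [SameSection, hij, true_and, not_forall, not_not] at h
  obtain ⟨c, hic, hcj, hcut⟩ := h
  exact (hcut i hic).trans_lt hcj

lemma StrangCanonical.avoids321 (hσ : StrangCanonical σ)
    (hfix : ∀ m, σ m = m → ∀ i, SameSection σ i m → i = m) : Avoids321 σ := by
  intro a b c hab hbc hba hcb
  rcases lt_trichotomy b (σ b) with hb | hb | hb
  · exact hba.not_gt (hσ.1 a b hab (hab.trans (hb.trans hba)) hb)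
  · have hab' : σ a < b :=
      apply_lt_of_not_sameSection hab.le fun h => hab.ne (hfix b hb.symm a h)
    exact hba.not_gt (hab'.trans_eq hb)
  · exact hcb.not_gt (hσ.2 b c hbc hb ((hcb.trans hb).trans hbc))

end Fin

/-- If `σ` is Strang canonical and every fixed point of `σ` lies in a trivial
section, then iterating the reduction map reaches the identity; consequently `σ` is the
product of the corresponding reducing permutations, each of bandwidth at most 1. -/
theorem stmt_5 (n : ℕ) (σ : Equiv.Perm (Fin n)) (hsc : StrangCanonical σ)
    (hfix : ∀ m : Fin n, σ m = m → ∀ j : Fin n, InSameSection σ m j → j = m) :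
    ∃ q : ℕ, reduction^[q] σ = 1 ∧
      σ = (((List.range q).map fun k => reducingPerm (reduction^[k] σ)).reverse).prod ∧
      ∀ k < q, bandwidth (reducingPerm (reduction^[k] σ)) ≤ 1 := by
  have havoids : Avoids321 σ := hsc.avoids321 fun m hm i hi => hfix m hm i (.inr hi)
  obtain ⟨q, hq⟩ := havoids.exists_iterate_reduction_eq_one
  refine ⟨q, hq, ?_, fun k _ => bandwidth_reducingPerm_le_one _⟩
  simpa [hq] using (iterate_reduction_mul_prod_reducingPerm σ q).symm
end

section
/- For every w ≥ 1, the cyclic shift by w on {1,…,2w} has bandwidth exactly w, can be written as a product of 2w − 1 permutations of bandwidth at most 1, and cannot be written as a product of fewer than 2w − 1 permutations of bandwidth at most 1 (so Strang's bound 2w − 1 is tight). -/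
/-!
A product of `m` permutations of bandwidth at most 1 is a motion of `n` particles in `m` time steps,
in which every particle moves by at most one position per step and no two ever collide.

Upper bound: to exchange the first `n - s` particles with the last `s`, start each particle as soon
as the one ahead of it has made a step, and let it move at unit speed to its destination.
The two particles at the interface start at time 0 and the last particle arrives at time `n - 1`.

Lower bound: split a product of at most `n - 2` factors into a final part of at most `s - 1`
factors and an initial part of at most `n - s - 1` factors. The particle that is at position 0 in
between started among the first `n - s` positions, so the shift moves it right by `s`, but it
ends among the first `s` positions.
-/

section Bandwidth

variable {n k : ℕ}

theorem natAbs_apply_sub_le_bandwidth (σ : Equiv.Perm (Fin n)) (i : Fin n) :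
    ((σ i : ℤ) - i).natAbs ≤ bandwidth σ :=
  Finset.le_sup (f := fun i : Fin n => ((σ i : ℤ) - (i : ℤ)).natAbs) (Finset.mem_univ i)

theorem bandwidth_le_iff_s11 {σ : Equiv.Perm (Fin n)} :
    bandwidth σ ≤ k ↔ ∀ i, ((σ i : ℤ) - i).natAbs ≤ k := by
  simp [bandwidth]

theorem bandwidth_one : bandwidth (1 : Equiv.Perm (Fin n)) = 0 := by
  simp [bandwidth]

theorem bandwidth_mul_le (σ τ : Equiv.Perm (Fin n)) :
    bandwidth (σ * τ) ≤ bandwidth σ + bandwidth τ := by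
  refine bandwidth_le_iff_s11.mpr fun i => ?_
  have hσ := natAbs_apply_sub_le_bandwidth σ (τ i)
  have hτ := natAbs_apply_sub_le_bandwidth τ i
  rw [Equiv.Perm.mul_apply]
  omega

theorem bandwidth_list_prod_le {L : List (Equiv.Perm (Fin n))} (hL : ∀ τ ∈ L, bandwidth τ ≤ k) :
    bandwidth L.prod ≤ L.length * k := by
  induction L with
  | nil => simp [bandwidth_one]
  | cons τ L ih =>
    rw [List.forall_mem_cons] at hL
    calc bandwidth (τ :: L).prod
      _ ≤ bandwidth τ + bandwidth L.prod := by
        rw [List.prod_cons]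
        exact bandwidth_mul_le τ L.prod
      _ ≤ k + L.length * k := add_le_add hL.1 (ih hL.2)
      _ = (τ :: L).length * k := by rw [List.length_cons]; ring

theorem exists_natAbs_sub_le_of_length_le_add {L : List (Equiv.Perm (Fin n))} {p q : ℕ}
    (hL : ∀ τ ∈ L, bandwidth τ ≤ k) (hlen : L.length ≤ p + q) (c : Fin n) :
    ∃ x : Fin n, ((c : ℤ) - x).natAbs ≤ q * k ∧ ((L.prod x : ℤ) - c).natAbs ≤ p * k := by
  set α := (L.take p).prod
  set β := (L.drop p).prod
  have hαβ : L.prod = α * β := (L.prod_take_mul_prod_drop p).symm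
  have hα_le : bandwidth α ≤ p * k :=
    (bandwidth_list_prod_le fun τ hτ => hL τ (List.mem_of_mem_take hτ)).trans
      (Nat.mul_le_mul_right k (L.length_take_le p))
  have hβ_le : bandwidth β ≤ q * k :=
    (bandwidth_list_prod_le fun τ hτ => hL τ (List.mem_of_mem_drop hτ)).trans
      (Nat.mul_le_mul_right k (by rw [List.length_drop]; omega))
  refine ⟨β⁻¹ c, ?_, ?_⟩
  · simpa using bandwidth_le_iff_s11.mp hβ_le (β⁻¹ c)
  · simpa [hαβ] using bandwidth_le_iff_s11.mp hα_le c

theorem exists_list_prod_eq_of_path (f : ℕ → Equiv.Perm (Fin n)) (h_zero : f 0 = 1)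
    (h_step : ∀ t i, ((f (t + 1) i : ℤ) - f t i).natAbs ≤ k) (m : ℕ) :
    ∃ L : List (Equiv.Perm (Fin n)),
      L.length = m ∧ (∀ τ ∈ L, bandwidth τ ≤ k) ∧ L.prod = f m := by
  induction m with
  | zero => exact ⟨[], by simp [h_zero]⟩
  | succ m ih =>
    obtain ⟨L, hlen, hL, hprod⟩ := ih
    have h_factor : bandwidth (f (m + 1) * (f m)⁻¹) ≤ k :=
      bandwidth_le_iff_s11.mpr fun i => by simpa using h_step m ((f m)⁻¹ i)
    exact ⟨f (m + 1) * (f m)⁻¹ :: L, by simp [hlen], List.forall_mem_cons.mpr ⟨h_factor, hL⟩,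
      by simp [hprod]⟩

end Bandwidth

section CyclicShift

variable {n s : ℕ}

theorem val_cyclicShift_apply (n s : ℕ) (i : Fin n) :
    (cyclicShift n s i : ℕ) = (i + s) % n := by
  have : NeZero n := ⟨i.pos.ne'⟩
  induction s with
  | zero => simp [cyclicShift, Nat.mod_eq_of_lt i.isLt]
  | succ s ih =>
    have h_succ : cyclicShift n (s + 1) i = finRotate n (cyclicShift n s i) := by
      simp [cyclicShift, pow_succ']
    rw [h_succ, finRotate_apply, Fin.val_add, ih, Fin.val_one', ← Nat.add_mod, add_assoc]

theorem val_cyclicShift_apply_of_lt {i : Fin n} (hi : (i : ℕ) < n - s) :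
    (cyclicShift n s i : ℕ) = i + s := by
  rw [val_cyclicShift_apply, Nat.mod_eq_of_lt (by omega)]

theorem val_cyclicShift_apply_of_ge (hs : s ≤ n) {i : Fin n} (hi : n - s ≤ i) :
    (cyclicShift n s i : ℕ) = i - (n - s) := by
  rw [val_cyclicShift_apply, Nat.mod_eq_sub_mod (by omega), Nat.mod_eq_of_lt (by omega)]
  omega

theorem bandwidth_cyclicShift (hs : 0 < s) (hsn : s < n) :
    bandwidth (cyclicShift n s) = max s (n - s) := by
  refine le_antisymm (bandwidth_le_iff_s11.mpr fun i => ?_) (max_le ?_ ?_)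
  · rcases lt_or_ge (i : ℕ) (n - s) with hi | hi
    · rw [val_cyclicShift_apply_of_lt hi]
      omega
    · rw [val_cyclicShift_apply_of_ge hsn.le hi]
      omega
  · have h := natAbs_apply_sub_le_bandwidth (cyclicShift n s) ⟨0, by omega⟩
    rw [val_cyclicShift_apply_of_lt (Nat.sub_pos_of_lt hsn)] at h
    simpa using h
  · have h := natAbs_apply_sub_le_bandwidth (cyclicShift n s) ⟨n - s, by omega⟩
    rw [val_cyclicShift_apply_of_ge hsn.le le_rfl] at h
    simpa using h

/-- The position at time `t` of the particle that starts at `i`, when the first `n - s` particles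
trade places with the last `s`: it waits for the `n - s - 1 - i` (respectively `i - (n - s)`)
particles between it and the interface to start, then moves at unit speed to its destination.
Truncated subtraction encodes the waiting. -/
def slide (n s t : ℕ) (i : Fin n) : Fin n :=
  ⟨if (i : ℕ) < n - s then i + min (t - (n - s - 1 - i)) s
    else i - min (t - (i - (n - s))) (n - s), by split_ifs <;> omega⟩

-- Two particles moving in opposite directions are at odd distance, so they pass without meeting.
theorem slide_injective (n s t : ℕ) : Function.Injective (slide n s t) := by
  intro i j hij
  simp only [slide, Fin.mk.injEq] at hij
  apply Fin.ext
  split_ifs at hij <;> omega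

/-- `slide` as a permutation: the product of the `t` factors applied first in the factorization of
`cyclicShift n s`. -/
noncomputable def slidePerm (n s t : ℕ) : Equiv.Perm (Fin n) :=
  Equiv.ofBijective (slide n s t) (Finite.injective_iff_bijective.mp (slide_injective n s t))

theorem slidePerm_zero (n s : ℕ) : slidePerm n s 0 = 1 := by
  ext i
  simp [slidePerm, slide]

theorem natAbs_slidePerm_succ_sub_le (n s t : ℕ) (i : Fin n) :
    ((slidePerm n s (t + 1) i : ℤ) - slidePerm n s t i).natAbs ≤ 1 := by
  simp only [slidePerm, Equiv.ofBijective_apply, slide]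
  split_ifs <;> omega

theorem slidePerm_sub_one (hs : s ≤ n) : slidePerm n s (n - 1) = cyclicShift n s := by
  ext i
  simp only [slidePerm, Equiv.ofBijective_apply, slide]
  split_ifs with hi
  · rw [val_cyclicShift_apply_of_lt hi]
    omega
  · rw [val_cyclicShift_apply_of_ge hs (not_lt.mp hi)]
    omega

theorem exists_list_prod_eq_cyclicShift (hs : s ≤ n) :
    ∃ L : List (Equiv.Perm (Fin n)),
      L.length = n - 1 ∧ (∀ τ ∈ L, bandwidth τ ≤ 1) ∧ L.prod = cyclicShift n s := by
  rw [← slidePerm_sub_one hs]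
  exact exists_list_prod_eq_of_path (slidePerm n s) (slidePerm_zero n s)
    (natAbs_slidePerm_succ_sub_le n s) (n - 1)

theorem sub_one_le_length_of_prod_eq_cyclicShift (hs : 0 < s) (hsn : s < n)
    {L : List (Equiv.Perm (Fin n))} (hL : ∀ τ ∈ L, bandwidth τ ≤ 1)
    (hprod : L.prod = cyclicShift n s) : n - 1 ≤ L.length := by
  by_contra! hlt
  obtain ⟨x, hx, hx_shift⟩ := exists_natAbs_sub_le_of_length_le_add (p := s - 1) (q := n - s - 1)
    hL (by omega) ⟨0, by omega⟩
  have hx_lt : (x : ℕ) < n - s := by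
    simp only at hx
    omega
  rw [hprod, val_cyclicShift_apply_of_lt hx_lt] at hx_shift
  simp only at hx_shift
  omega

end CyclicShift

theorem stmt_11_general (n s : ℕ) (hs : 0 < s) (hsn : s < n) :
    bandwidth (cyclicShift n s) = max s (n - s) ∧
    (∃ L : List (Equiv.Perm (Fin n)),
      L.length = n - 1 ∧ (∀ τ ∈ L, bandwidth τ ≤ 1) ∧ L.prod = cyclicShift n s) ∧
    (∀ L : List (Equiv.Perm (Fin n)),
      (∀ τ ∈ L, bandwidth τ ≤ 1) → L.prod = cyclicShift n s → n - 1 ≤ L.length) :=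
  ⟨bandwidth_cyclicShift hs hsn, exists_list_prod_eq_cyclicShift hsn.le,
    fun _ hL hprod => sub_one_le_length_of_prod_eq_cyclicShift hs hsn hL hprod⟩

/-- Tightness of Strang's bound: the cyclic shift by `w` on `{1,…,2w}` has
bandwidth exactly `w`, is a product of `2w - 1` permutations of bandwidth at most 1, and is
not a product of fewer than `2w - 1` such permutations. -/
theorem stmt_11 (w : ℕ) (hw : 1 ≤ w) :
    bandwidth (cyclicShift (2 * w) w) = w ∧
    (∃ L : List (Equiv.Perm (Fin (2 * w))),
      L.length = 2 * w - 1 ∧ (∀ τ ∈ L, bandwidth τ ≤ 1) ∧ L.prod = cyclicShift (2 * w) w) ∧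
    (∀ L : List (Equiv.Perm (Fin (2 * w))),
      (∀ τ ∈ L, bandwidth τ ≤ 1) → L.prod = cyclicShift (2 * w) w → 2 * w - 1 ≤ L.length) := by
  have h_max : max w (2 * w - w) = w := by omega
  simpa only [h_max] using stmt_11_general (2 * w) w hw (by omega)
end
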